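/- Let G be a 2-connected finite simple graph, Z a cycle in G, λ : E(G) → ℤ/2 an edge labeling, and B a bridge of G with respect to Z such that every proper path in B with both endpoints in V(B) ∩ V(Z) is nontrivial. Then |V(B) ∩ V(Z)| = 2; moreover, writing V(B) ∩ V(Z) = {x, y}, there exists a nontrivial proper walk in B from x to y, and every proper closed walk in B based at x or at y is trivial (that is, B induces the single arrow between x and y and no loop). -/

import Mathlib

open SimpleGraph

variable {V : Type*}

/-- The `λ`-value of a walk: the sum in `ℤ/2`, over the edges of the walk counted with
multiplicity, of their labels. -/
def walkLambda (lam : Sym2 V → ZMod 2) {G : SimpleGraph V} {x y : V} (w : G.Walk x y) :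
    ZMod 2 :=
  (w.edges.map lam).sum

/-- `b` can be reached from `a` by a walk in `G` all of whose vertices avoid `Zv`. -/
def ReachAvoiding (G : SimpleGraph V) (Zv : Set V) (a b : V) : Prop :=
  ∃ w : G.Walk a b, ∀ x ∈ w.support, x ∉ Zv

/-- `B` is a bridge of `G` with respect to a cycle with vertex set `Zv` and edge set `Ze`:
either a single edge not of the cycle together with its two endpoints, both on the cycle,
or a connected component of `G − Zv` together with all edges (and their endpoints on the
cycle) joining it to `Zv`. -/
def IsBridgeOf (G : SimpleGraph V) (Zv : Set V) (Ze : Set (Sym2 V)) (B : G.Subgraph) :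
    Prop :=
  (∃ u v, G.Adj u v ∧ s(u, v) ∉ Ze ∧ u ∈ Zv ∧ v ∈ Zv ∧
      B.verts = {u, v} ∧ ∀ a b, B.Adj a b ↔ s(a, b) = s(u, v)) ∨
  (∃ a, a ∉ Zv ∧
      B.verts = {b | ReachAvoiding G Zv a b} ∪
        {z | z ∈ Zv ∧ ∃ c, ReachAvoiding G Zv a c ∧ G.Adj c z} ∧
      ∀ x y, B.Adj x y ↔
        G.Adj x y ∧ (ReachAvoiding G Zv a x ∨ ReachAvoiding G Zv a y))

/-- `w` is a proper walk lying in the subgraph `B`, with respect to a cycle with vertex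
set `Zv` and edge set `Ze`: the walk lies in `B`, none of its vertices lies on the cycle
except possibly its endpoints, and none of its edges is an edge of the cycle. -/
def IsProperWalkIn {G : SimpleGraph V} (B : G.Subgraph) (Zv : Set V) (Ze : Set (Sym2 V))
    {x y : V} (w : G.Walk x y) : Prop :=
  (∀ u ∈ w.support, u ∈ B.verts) ∧ (∀ e ∈ w.edges, e ∈ B.edgeSet) ∧
    (∀ u ∈ w.support, u ∈ Zv → u = x ∨ u = y) ∧ (∀ e ∈ w.edges, e ∉ Ze)

/-- The set of `λ`-values of proper walks in `B` from `x` to the reference vertex `w`. -/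
def labelSet {G : SimpleGraph V} (B : G.Subgraph) (Zv : Set V) (Ze : Set (Sym2 V))
    (lam : Sym2 V → ZMod 2) (x w : V) : Set (ZMod 2) :=
  {t | ∃ ω : G.Walk x w, IsProperWalkIn B Zv Ze ω ∧ walkLambda lam ω = t}

/-- A graph is 2-connected: it has at least three vertices, it is connected, and it
remains connected after the deletion of any single vertex. -/
def TwoConnected (G : SimpleGraph V) : Prop :=
  3 ≤ Nat.card V ∧ G.Connected ∧ ∀ v : V, (G.induce {u | u ≠ v}).Connected

section Aux

variable {H : SimpleGraph V} {lam : Sym2 V → ZMod 2}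

lemma wl_append {a b c : V} (p : H.Walk a b) (q : H.Walk b c) :
    walkLambda lam (p.append q) = walkLambda lam p + walkLambda lam q := by
  simp [walkLambda, Walk.edges_append]

lemma wl_reverse {a b : V} (p : H.Walk a b) :
    walkLambda lam p.reverse = walkLambda lam p := by
  simp [walkLambda, Walk.edges_reverse]

lemma wl_cons {a b c : V} (h : H.Adj a b) (q : H.Walk b c) :
    walkLambda lam (Walk.cons h q) = lam s(a, b) + walkLambda lam q := by
  simp [walkLambda]

lemma z2_self (a : ZMod 2) : a + a = 0 := by revert a; decide

lemma z2_mid (a b c : ZMod 2) : (a + b) + (b + c) = a + c := by revert a b c; decide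

lemma wl_pot {f : V → ZMod 2} {a b : V} (w : H.Walk a b)
    (h : ∀ c d, s(c, d) ∈ w.edges → lam s(c, d) = f c + f d) :
    walkLambda lam w = f a + f b := by
  induction w with
  | nil => simp [walkLambda, z2_self]
  | cons hadj p ih =>
    rw [wl_cons, ih (fun c d hc => h c d (by simp [hc])), h _ _ (by simp), z2_mid]

lemma path_append {a b c : V} {p : H.Walk a b} {q : H.Walk b c} (hp : p.IsPath) (hq : q.IsPath)
    (h : ∀ t ∈ p.support, t ∈ q.support → t = b) : (p.append q).IsPath := by
  rw [Walk.isPath_def, Walk.support_append, List.nodup_append]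
  have hq' := hq.support_nodup
  rw [← Walk.cons_tail_support, List.nodup_cons] at hq'
  refine ⟨hp.support_nodup, hq'.2, ?_⟩
  rintro t ht s hs rfl
  have := h t ht (List.mem_of_mem_tail hs)
  subst this
  exact hq'.1 hs

lemma path_split {a b z : V} {w : H.Walk a b} (hw : w.IsPath) (hz : z ∈ w.support) :
    ∃ (p : H.Walk a z) (q : H.Walk z b), p.IsPath ∧ q.IsPath ∧ w = p.append q ∧
      ∀ t ∈ p.support, t ∈ q.support → t = z := by
  classical
  obtain ⟨p, q, rfl⟩ : ∃ (p : H.Walk a z) (q : H.Walk z b), w = p.append q :=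
    ⟨_, _, (w.take_spec hz).symm⟩
  refine ⟨p, q, hw.of_append_left, hw.of_append_right, rfl, ?_⟩
  intro t ht htq
  rw [Walk.isPath_def, Walk.support_append, List.nodup_append] at hw
  rw [Walk.mem_support_iff] at htq
  rcases htq with h | h
  · exact h
  · exact absurd rfl (hw.2.2 t ht t h)

/-- first hit -/
lemma first_hit {S : Set V} {a b : V} (w : H.Walk a b) (hb : b ∈ S) :
    ∃ m ∈ S, ∃ r : H.Walk a m, (∀ t ∈ r.support, t ∈ w.support) ∧
      ∀ t ∈ r.support, t ∈ S → t = m := by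
  induction w with
  | nil => exact ⟨_, hb, Walk.nil, by simp, by simp⟩
  | @cons u v c hadj p ih =>
    by_cases hu : u ∈ S
    · exact ⟨u, hu, Walk.nil, by simp, by simp⟩
    · obtain ⟨m, hm, r, h1, h2⟩ := ih hb
      refine ⟨m, hm, Walk.cons hadj r, ?_, ?_⟩
      · intro t ht
        simp only [Walk.support_cons, List.mem_cons] at ht ⊢
        exact ht.imp id (h1 t)
      · intro t ht htS
        simp only [Walk.support_cons, List.mem_cons] at ht
        rcases ht with rfl | ht
        · exact absurd htS hu
        · exact h2 t ht htS

lemma path_pot {a b : V} (w : H.Walk a b) (hw : w.IsPath) (c₀ : ZMod 2) :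
    ∃ g : V → ZMod 2, g a = c₀ ∧ ∀ c d, s(c, d) ∈ w.edges → lam s(c, d) = g c + g d := by
  classical
  induction w generalizing c₀ with
  | nil => exact ⟨fun _ => c₀, rfl, by simp⟩
  | @cons u v t hadj p ih =>
    rw [Walk.cons_isPath_iff] at hw
    obtain ⟨g, hg, h⟩ := ih hw.1 (c₀ + lam s(u, v))
    refine ⟨Function.update g u c₀, by simp, ?_⟩
    have hne : v ≠ u := hadj.ne'
    have key : lam s(u, v) = c₀ + g v := by
      rw [hg, ← add_assoc, z2_self, zero_add]
    intro c d hcd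
    rw [Walk.edges_cons, List.mem_cons] at hcd
    rcases hcd with hcd | hcd
    · rw [hcd]
      rcases Sym2.eq_iff.1 hcd with ⟨rfl, rfl⟩ | ⟨rfl, rfl⟩
      · simp [hne, key]
      · simp [hne, key, add_comm]
    · have hc : c ≠ u := by rintro rfl; exact hw.2 (p.fst_mem_support_of_mem_edges hcd)
      have hd : d ≠ u := by rintro rfl; exact hw.2 (p.snd_mem_support_of_mem_edges hcd)
      simp [hc, hd, h c d hcd]

/-- disjoint linking -/
def Lk (H : SimpleGraph V) (lam : Sym2 V → ZMod 2) (S : Set V) (f : V → ZMod 2)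
    (x y u v : V) : Prop :=
  ∃ (p : H.Walk u x) (q : H.Walk v y), p.IsPath ∧ q.IsPath ∧ (∀ t ∈ p.support, t ∈ S) ∧
    (∀ t ∈ q.support, t ∈ S) ∧ (∀ t ∈ p.support, t ∉ q.support) ∧
    walkLambda lam p = f u + f x ∧ walkLambda lam q = f v + f y

lemma Lk.prepend {S S' : Set V} {f f' : V → ZMod 2} {x y a b z z' : V}
    (h : Lk H lam S f x y a b) (r : H.Walk z a) (r' : H.Walk z' b)
    (hr : r.IsPath) (hr' : r'.IsPath) (hd : ∀ t ∈ r.support, t ∉ r'.support)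
    (hrS : ∀ t ∈ r.support, t ∈ S → t = a) (hrS' : ∀ t ∈ r'.support, t ∈ S → t = b)
    (hSS : S ⊆ S') (hrs : ∀ t ∈ r.support, t ∈ S') (hrs' : ∀ t ∈ r'.support, t ∈ S')
    (hl : walkLambda lam r = f' z + f' a) (hl' : walkLambda lam r' = f' z' + f' b)
    (hff : ∀ t ∈ S, f' t = f t) : Lk H lam S' f' x y z z' := by
  obtain ⟨p, q, hp, hq, hpS, hqS, hpq, hlp, hlq⟩ := h
  refine ⟨r.append p, r'.append q, path_append hr hp fun t h1 h2 => hrS t h1 (hpS t h2),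
    path_append hr' hq fun t h1 h2 => hrS' t h1 (hqS t h2), ?_, ?_, ?_, ?_, ?_⟩
  · intro t ht
    rw [Walk.mem_support_append_iff] at ht
    exact ht.elim (hrs t) fun h => hSS (hpS t h)
  · intro t ht
    rw [Walk.mem_support_append_iff] at ht
    exact ht.elim (hrs' t) fun h => hSS (hqS t h)
  · intro t ht ht'
    rw [Walk.mem_support_append_iff] at ht ht'
    rcases ht with ht | ht <;> rcases ht' with ht' | ht'
    · exact hd t ht ht'
    · have := hrS t ht (hqS t ht'); subst this
      exact hpq t p.start_mem_support ht'
    · have := hrS' t ht' (hpS t ht); subst this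
      exact hpq t ht q.start_mem_support
    · exact hpq t ht ht'
  · rw [wl_append, hl, hlp, ← hff a (hpS a p.start_mem_support),
      ← hff x (hpS x p.end_mem_support), z2_mid]
  · rw [wl_append, hl', hlq, ← hff b (hqS b q.start_mem_support),
      ← hff y (hqS y q.end_mem_support), z2_mid]

def Good (H : SimpleGraph V) (lam : Sym2 V → ZMod 2) (x y : V) (S : Set V) (f : V → ZMod 2) :
    Prop :=
  x ∈ S ∧ y ∈ S ∧ f x = 0 ∧ f y = 1 ∧
    ∀ u ∈ S, ∀ v ∈ S, u ≠ v → Lk H lam S f x y u v ∨ Lk H lam S f x y v u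

/-- an ear has the right value -/
lemma Lk.ear_aux {S : Set V} {f : V → ZMod 2} {x y u v : V}
    (hx : f x = 0) (hy : f y = 1)
    (h1 : ∀ w : H.Walk x y, w.IsPath → walkLambda lam w = 1)
    (h : Lk H lam S f x y u v) (w : H.Walk u v) (hw : w.IsPath)
    (hS : ∀ t ∈ w.support, t ∈ S → t = u ∨ t = v) : walkLambda lam w = f u + f v := by
  obtain ⟨p, q, hp, hq, hpS, hqS, hpq, hlp, hlq⟩ := h
  have hwq : (w.append q).IsPath := by
    refine path_append hw hq fun t h1 h2 => ?_
    rcases hS t h1 (hqS t h2) with rfl | rfl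
    · exact absurd h2 (hpq t p.start_mem_support)
    · rfl
  have hall : (p.reverse.append (w.append q)).IsPath := by
    refine path_append hp.reverse hwq fun t h1 h2 => ?_
    rw [Walk.support_reverse, List.mem_reverse] at h1
    rw [Walk.mem_support_append_iff] at h2
    rcases h2 with h2 | h2
    · rcases hS t h2 (hpS t h1) with rfl | rfl
      · rfl
      · exact absurd q.start_mem_support (hpq t h1)
    · exact absurd h2 (hpq t h1)
  have := h1 _ hall
  rw [wl_append, wl_append, wl_reverse, hlp, hlq, hx, hy] at this
  revert this
  generalize walkLambda lam w = a
  generalize f u = b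
  generalize f v = c
  revert a b c
  decide

lemma Good.ear {S : Set V} {f : V → ZMod 2} {x y u v : V} (hg : Good H lam x y S f)
    (h1 : ∀ w : H.Walk x y, w.IsPath → walkLambda lam w = 1)
    (hu : u ∈ S) (hv : v ∈ S) (huv : u ≠ v) (w : H.Walk u v) (hw : w.IsPath)
    (hS : ∀ t ∈ w.support, t ∈ S → t = u ∨ t = v) : walkLambda lam w = f u + f v := by
  obtain ⟨-, -, hx, hy, hL⟩ := hg
  rcases hL u hu v hv huv with h | h
  · exact h.ear_aux hx hy h1 w hw hS
  · have := h.ear_aux hx hy h1 w.reverse hw.reverse (by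
      intro t ht hts
      rw [Walk.support_reverse, List.mem_reverse] at ht
      exact (hS t ht hts).symm)
    rw [wl_reverse] at this
    rw [this, add_comm]

lemma Good.extend {S : Set V} {f : V → ZMod 2} {x y u v : V} (hg : Good H lam x y S f)
    (h1 : ∀ w : H.Walk x y, w.IsPath → walkLambda lam w = 1)
    (hu : u ∈ S) (hv : v ∈ S) (huv : u ≠ v) (w : H.Walk u v) (hw : w.IsPath)
    (hS : ∀ t ∈ w.support, t ∈ S → t = u ∨ t = v) :
    ∃ f', Good H lam x y (S ∪ {t | t ∈ w.support}) f' := by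
  classical
  have hlw := hg.ear h1 hu hv huv w hw hS
  obtain ⟨g, hgu, hgw⟩ := path_pot (lam := lam) w hw (f u)
  have hgv : g v = f v := by
    have := wl_pot w hgw
    rw [hlw, hgu] at this
    exact (add_left_cancel this).symm
  obtain ⟨hxS, hyS, hx, hy, hL⟩ := hg
  set f' : V → ZMod 2 := fun t => if t ∈ S then f t else g t with hf'
  have hff : ∀ t ∈ S, f' t = f t := fun t ht => by simp [hf', ht]
  have hfg : ∀ t ∈ w.support, f' t = g t := by
    intro t ht
    by_cases hts : t ∈ S
    · rcases hS t ht hts with rfl | rfl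
      · rw [hff _ hu, hgu]
      · rw [hff _ hv, hgv]
    · simp [hf', hts]
  have hsub : ∀ {c d : V} (r : H.Walk c d), (∀ e ∈ r.edges, e ∈ w.edges) →
      c ∈ w.support → d ∈ w.support → walkLambda lam r = f' c + f' d := by
    intro c d r hr hc hd
    rw [hfg c hc, hfg d hd]
    exact wl_pot r fun a b hab => hgw a b (hr _ hab)
  -- symmetric linking
  set L := fun a b => Lk H lam (S ∪ {t | t ∈ w.support}) f' x y a b ∨
    Lk H lam (S ∪ {t | t ∈ w.support}) f' x y b a with hLdef
  have hsymm : ∀ a b, L a b → L b a := fun a b h => Or.symm h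
  have pre : ∀ {a b z z' : V} (r : H.Walk z a) (r' : H.Walk z' b), a ∈ S → b ∈ S →
      r.IsPath → r'.IsPath → (∀ t ∈ r.support, t ∉ r'.support) →
      (∀ t ∈ r.support, t ∈ S → t = a) → (∀ t ∈ r'.support, t ∈ S → t = b) →
      (∀ t ∈ r.support, t ∈ S ∪ {t | t ∈ w.support}) →
      (∀ t ∈ r'.support, t ∈ S ∪ {t | t ∈ w.support}) →
      walkLambda lam r = f' z + f' a → walkLambda lam r' = f' z' + f' b → L z z' := by
    intro a b z z' r r' ha hb hr hr' hd hrS hrS' hs hs' hl hl'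
    have hab : a ≠ b := by
      rintro rfl
      exact hd _ r.end_mem_support r'.end_mem_support
    rcases hL a ha b hb hab with h | h
    · exact Or.inl (h.prepend r r' hr hr' hd hrS hrS' Set.subset_union_left hs hs' hl hl' hff)
    · exact Or.inr (h.prepend r' r hr' hr (fun t h1 h2 => hd t h2 h1) hrS' hrS
        Set.subset_union_left hs' hs hl' hl hff)
  have nilL : ∀ z, walkLambda lam (Walk.nil : H.Walk z z) = f' z + f' z := by
    intro z; simp [walkLambda, z2_self]
  -- case one on the ear, one in S
  have mixed : ∀ z ∈ w.support, z ∉ S → ∀ s ∈ S, L z s := by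
    intro z hz hzS s hs
    obtain ⟨p, q, hp, hq, hpq, hdis⟩ := path_split hw hz
    have hpw : ∀ t ∈ p.support, t ∈ w.support := fun t ht => by
      rw [hpq, Walk.mem_support_append_iff]; exact Or.inl ht
    have hqw : ∀ t ∈ q.support, t ∈ w.support := fun t ht => by
      rw [hpq, Walk.mem_support_append_iff]; exact Or.inr ht
    have hvp : v ∉ p.support := fun h => hzS (hdis v h q.end_mem_support ▸ hv)
    have huq : u ∉ q.support := fun h => hzS (hdis u p.start_mem_support h ▸ hu)
    have hpS : ∀ t ∈ p.support, t ∈ S → t = u := by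
      intro t ht hts
      rcases hS t (hpw t ht) hts with h | rfl
      · exact h
      · exact absurd ht hvp
    have hqS : ∀ t ∈ q.support, t ∈ S → t = v := by
      intro t ht hts
      rcases hS t (hqw t ht) hts with rfl | h
      · exact absurd ht huq
      · exact h
    by_cases hsu : s = u
    · subst hsu
      refine pre q (Walk.nil : H.Walk s s) hv hu hq (by simp) ?_ hqS (by simp)
        (fun t ht => Or.inr (hqw t ht)) (by simp [hs]) ?_ (nilL _)
      · rintro t ht ht'
        simp only [Walk.support_nil, List.mem_singleton] at ht'
        subst ht'; exact huq ht
      · exact hsub q (fun e he => by rw [hpq, Walk.edges_append]; simp [he]) hz w.end_mem_support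
    · refine pre p.reverse (Walk.nil : H.Walk s s) hu hs hp.reverse (by simp) ?_ ?_ (by simp)
        ?_ (by simp [hs]) ?_ (nilL _)
      · rintro t ht ht'
        simp only [Walk.support_nil, List.mem_singleton, Walk.support_reverse,
          List.mem_reverse] at ht ht'
        subst ht'; exact hsu (hpS t ht hs)
      · intro t ht; exact hpS t (by simpa using ht)
      · intro t ht; exact Or.inr (hpw t (by simpa using ht))
      · exact hsub _ (fun e he => by
          rw [hpq, Walk.edges_append]
          rw [Walk.edges_reverse, List.mem_reverse] at he; simp [he]) hz w.start_mem_support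
  -- both on the ear
  have both : ∀ z ∈ w.support, z ∉ S → ∀ z' ∈ w.support, z' ∉ S → z ≠ z' → L z z' := by
    have ordered : ∀ z z' (p : H.Walk u z) (q : H.Walk z v), z ∉ S → z' ∉ S → z ≠ z' →
        p.IsPath → q.IsPath → w = p.append q → (∀ t ∈ p.support, t ∈ q.support → t = z) →
        z' ∈ q.support → L z z' := by
      intro z z' p q hzS hzS' hne hp hq hpq hdis hz'
      obtain ⟨q1, q2, -, hq2, hqq, hdis2⟩ := path_split hq hz'
      have hq2q : ∀ t ∈ q2.support, t ∈ q.support := fun t ht => by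
        rw [hqq, Walk.mem_support_append_iff]; exact Or.inr ht
      have hpw : ∀ t ∈ p.support, t ∈ w.support := fun t ht => by
        rw [hpq, Walk.mem_support_append_iff]; exact Or.inl ht
      have hqw : ∀ t ∈ q.support, t ∈ w.support := fun t ht => by
        rw [hpq, Walk.mem_support_append_iff]; exact Or.inr ht
      have hvp : v ∉ p.support := fun h => hzS (hdis v h q.end_mem_support ▸ hv)
      have huq : u ∉ q.support := fun h => hzS (hdis u p.start_mem_support h ▸ hu)
      refine pre p.reverse q2 hu hv hp.reverse hq2 ?_ ?_ ?_ ?_ ?_ ?_ ?_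
      · intro t ht ht'
        rw [Walk.support_reverse, List.mem_reverse] at ht
        have := hdis t ht (hq2q t ht')
        subst this
        exact hne (hdis2 t q1.start_mem_support ht')
      · intro t ht hts
        rw [Walk.support_reverse, List.mem_reverse] at ht
        rcases hS t (hpw t ht) hts with h | rfl
        · exact h
        · exact absurd ht hvp
      · intro t ht hts
        rcases hS t (hqw t (hq2q t ht)) hts with rfl | h
        · exact absurd (hq2q t ht) huq
        · exact h
      · intro t ht; exact Or.inr (hpw t (by simpa using ht))
      · intro t ht; exact Or.inr (hqw t (hq2q t ht))
      · exact hsub _ (fun e he => by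
          rw [hpq, Walk.edges_append]
          rw [Walk.edges_reverse, List.mem_reverse] at he; simp [he])
          (hpw _ p.end_mem_support) w.start_mem_support
      · exact hsub _ (fun e he => by
          rw [hpq, hqq, Walk.edges_append, Walk.edges_append]; simp [he])
          (hqw _ hz') w.end_mem_support
    intro z hz hzS z' hz' hzS' hne
    obtain ⟨p, q, hp, hq, hpq, hdis⟩ := path_split hw hz
    have hz'' := hz'
    rw [hpq, Walk.mem_support_append_iff] at hz''
    rcases hz'' with h | h
    · obtain ⟨p1, p2, hp1, hp2, hpp, hdis2⟩ := path_split hp h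
      have hw2 : w = p1.append (p2.append q) := by rw [hpq, hpp, Walk.append_assoc]
      have hpath : (p2.append q).IsPath := by
        have := hw; rw [hw2] at this; exact this.of_append_right
      refine hsymm _ _ (ordered z' z p1 (p2.append q) hzS' hzS hne.symm hp1 hpath hw2 ?_ ?_)
      · intro t ht ht'
        rw [Walk.mem_support_append_iff] at ht'
        rcases ht' with ht' | ht'
        · exact hdis2 t ht ht'
        · have htz := hdis t (by rw [hpp, Walk.mem_support_append_iff]; exact Or.inl ht) ht'
          exact hdis2 t ht (by rw [htz]; exact p2.end_mem_support)
      · rw [Walk.mem_support_append_iff]; exact Or.inl p2.end_mem_support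
    · exact ordered z z' p q hzS hzS' hne hp hq hpq hdis h
  refine ⟨f', Or.inl hxS, Or.inl hyS, by rw [hff x hxS, hx], by rw [hff y hyS, hy], ?_⟩
  intro a ha b hb hab
  change L a b
  by_cases haS : a ∈ S <;> by_cases hbS : b ∈ S
  · refine pre (Walk.nil : H.Walk a a) (Walk.nil : H.Walk b b) haS hbS (by simp) (by simp)
      (by simpa using hab) (by simp) (by simp) (by simp [haS]) (by simp [hbS]) (nilL _) (nilL _)
  · exact hsymm _ _ (mixed b (hb.resolve_left hbS) hbS a haS)
  · exact mixed a (ha.resolve_left haS) haS b hbS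
  · exact both a (ha.resolve_left haS) haS b (hb.resolve_left hbS) hbS hab

theorem exists_pot [Finite V] {x y : V} (hxy : x ≠ y) {T : Set V}
    (hT : ∀ a b, H.Adj a b → a ∈ T)
    (h1 : ∀ w : H.Walk x y, w.IsPath → walkLambda lam w = 1)
    (h2 : ∀ t ∈ T, t ≠ x → t ≠ y → ∀ a, a ≠ t →
      ∃ m, (m = x ∨ m = y) ∧ ∃ r : H.Walk t m, a ∉ r.support) :
    ∃ f : V → ZMod 2, ∀ a b, H.Adj a b → lam s(a, b) = f a + f b := by
  classical
  have hne : ({S : Set V | ∃ f, Good H lam x y S f}).Nonempty := by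
    refine ⟨{x, y}, fun t => if t = x then 0 else 1, by simp, by simp, by simp,
      by simp [hxy.symm], ?_⟩
    have base : Lk H lam {x, y} (fun t => if t = x then 0 else 1) x y x y :=
      ⟨Walk.nil, Walk.nil, by simp, by simp, by simp, by simp, by simpa using hxy,
        by simp [walkLambda], by simp [walkLambda, z2_self]⟩
    intro u hu v hv huv
    rcases hu with rfl | rfl <;> rcases hv with rfl | rfl
    · exact absurd rfl huv
    · exact Or.inl base
    · exact Or.inr base
    · exact absurd rfl huv
  obtain ⟨S, hSmax⟩ := (Set.toFinite {S : Set V | ∃ f, Good H lam x y S f}).exists_maximal hne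
  obtain ⟨f, hg⟩ := hSmax.prop
  have hxS := hg.1
  have hyS := hg.2.1
  have hTS : ∀ t ∈ T, t ∈ S := by
    intro t ht
    by_contra htS
    have htx : t ≠ x := by rintro rfl; exact htS hxS
    have hty : t ≠ y := by rintro rfl; exact htS hyS
    have hit : ∀ a, a ≠ t → ∃ m ∈ S, ∃ r : H.Walk t m, a ∉ r.support ∧
        ∀ s ∈ r.support, s ∈ S → s = m := by
      intro a ha
      obtain ⟨m, hm, r, har⟩ := h2 t ht htx hty a ha
      have hmS : m ∈ S := by rcases hm with rfl | rfl <;> assumption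
      obtain ⟨m', hm', r', hs, hs'⟩ := first_hit r hmS
      exact ⟨m', hm', r', fun h => har (hs _ h), hs'⟩
    obtain ⟨m, hm, r, -, hr⟩ := hit x htx.symm
    obtain ⟨m', hm', r', hmr', hr'⟩ := hit m (by rintro rfl; exact htS hm)
    have hmm : m ≠ m' := by rintro rfl; exact hmr' r'.end_mem_support
    have hear : ∃ w : H.Walk m m', w.IsPath ∧ (∀ s ∈ w.support, s ∈ S → s = m ∨ s = m') ∧
        m ≠ m' ∧ ∃ s ∈ w.support, s ∉ S := by
      set w := (r.reverse.append r').bypass with hwdef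
      have hws : ∀ s ∈ w.support, s ∈ S → s = m ∨ s = m' := by
        intro s hs hsS
        have := Walk.support_bypass_subset_support _ hs
        rw [Walk.mem_support_append_iff, Walk.support_reverse, List.mem_reverse] at this
        exact this.imp (fun h => hr s h hsS) (fun h => hr' s h hsS)
      have hedge : s(m, m') ∉ w.edges := by
        intro h
        have := Walk.edges_bypass_subset_edges _ h
        rw [Walk.edges_append, Walk.edges_reverse, List.mem_append, List.mem_reverse] at this
        rcases this with h | h
        · exact hmm (hr m' (r.snd_mem_support_of_mem_edges h) hm').symm
        · exact hmr' (r'.fst_mem_support_of_mem_edges h)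
      have hwp : w.IsPath := Walk.bypass_isPath _
      refine ⟨w, hwp, hws, hmm, ?_⟩
      clear_value w
      cases w with
      | nil => exact absurd rfl hmm
      | @cons _ c _ hadj p =>
        refine ⟨c, by simp, fun hc => ?_⟩
        rcases hws c (by simp) hc with rfl | rfl
        · exact hadj.ne rfl
        · simp at hedge
    obtain ⟨w, hw, hwS, -, s, hsw, hsS⟩ := hear
    have := hSmax.le_of_ge (hg.extend h1 hm hm' hmm w hw hwS) Set.subset_union_left
    exact hsS (this (Or.inr hsw))
  refine ⟨f, fun a b hab => ?_⟩
  have haS := hTS a (hT a b hab)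
  have hbS := hTS b (hT b a hab.symm)
  have := hg.ear h1 haS hbS hab.ne (Walk.cons hab Walk.nil) (by simp [hab.ne]) (by simp)
  simpa [walkLambda] using this

end Aux

section Aux2

lemma z2_one {a : ZMod 2} (h : a ≠ 0) : a = 1 := by revert a; decide

lemma sp_support {G : SimpleGraph V} {B : G.Subgraph} {x y : V} (w : B.spanningCoe.Walk x y)
    (hx : x ∈ B.verts) : ∀ u ∈ w.support, u ∈ B.verts := by
  induction w with
  | nil => simpa using hx
  | cons hadj p ih =>
    intro u hu
    rw [Walk.support_cons, List.mem_cons] at hu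
    rcases hu with rfl | hu
    · exact hx
    · exact ih (B.edge_vert (show B.Adj _ _ from hadj).symm) u hu

lemma avoid_walk {G : SimpleGraph V} {v : V} (h : (G.induce {u | u ≠ v}).Connected) {a b : V}
    (ha : a ≠ v) (hb : b ≠ v) : ∃ w : G.Walk a b, v ∉ w.support := by
  obtain ⟨w⟩ := h.preconnected ⟨a, ha⟩ ⟨b, hb⟩
  have key : v ∉ (w.map (Embedding.induce {u | u ≠ v}).toHom).support := by
    rw [Walk.support_map, List.mem_map]
    rintro ⟨⟨t, ht⟩, -, h⟩
    exact ht h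
  exact ⟨w.map (Embedding.induce {u | u ≠ v}).toHom, key⟩

theorem comp_case [Fintype V] (G : SimpleGraph V) (lam : Sym2 V → ZMod 2)
    (h2 : TwoConnected G) (Zv : Set V) (Ze : Set (Sym2 V)) (B : G.Subgraph)
    (hZ2 : ∀ v, ∃ z ∈ Zv, z ≠ v) (hZe : ∀ a b, s(a, b) ∈ Ze → a ∈ Zv ∧ b ∈ Zv)
    (a : V) (haZ : a ∉ Zv)
    (hBv : B.verts = {b | ReachAvoiding G Zv a b} ∪
        {z | z ∈ Zv ∧ ∃ c, ReachAvoiding G Zv a c ∧ G.Adj c z})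
    (hBa : ∀ x y, B.Adj x y ↔
        G.Adj x y ∧ (ReachAvoiding G Zv a x ∨ ReachAvoiding G Zv a y))
    (hnt : ∀ x y, x ∈ B.verts → x ∈ Zv → y ∈ B.verts → y ∈ Zv → x ≠ y →
      ∀ w : G.Walk x y, w.IsPath → IsProperWalkIn B Zv Ze w → walkLambda lam w ≠ 0) :
    ∃ x y : V, x ≠ y ∧ B.verts ∩ Zv = {x, y} ∧
      (∃ w : G.Walk x y, IsProperWalkIn B Zv Ze w ∧ walkLambda lam w ≠ 0) ∧
      (∀ w : G.Walk x x, IsProperWalkIn B Zv Ze w → walkLambda lam w = 0) ∧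
      (∀ w : G.Walk y y, IsProperWalkIn B Zv Ze w → walkLambda lam w = 0) := by
  classical
  set C : V → Prop := fun b => ReachAvoiding G Zv a b with hC
  set H := B.spanningCoe with hH
  have hHle : H ≤ G := B.spanningCoe_le
  have hCa : C a := ⟨Walk.nil, by simpa using haZ⟩
  have hCnot : ∀ b, C b → b ∉ Zv := fun b ⟨w, hw⟩ => hw b w.end_mem_support
  have hCstep : ∀ t b, C t → G.Adj t b → b ∉ Zv → C b := by
    rintro t b ⟨w, hw⟩ hadj hb
    refine ⟨w.append (Walk.cons hadj Walk.nil), fun u hu => ?_⟩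
    rw [Walk.mem_support_append_iff] at hu
    rcases hu with hu | hu
    · exact hw u hu
    · simp only [Walk.support_cons, Walk.support_nil, List.mem_cons, List.not_mem_nil,
        or_false] at hu
      rcases hu with rfl | rfl
      · exact hw _ w.end_mem_support
      · exact hb
  have hHadj : ∀ s t, H.Adj s t ↔ G.Adj s t ∧ (C s ∨ C t) := fun s t => by
    rw [hH, Subgraph.spanningCoe_adj]; exact hBa s t
  have hvert : ∀ t, t ∈ B.verts ↔ C t ∨ (t ∈ Zv ∧ ∃ c, C c ∧ G.Adj c t) := fun t => by
    rw [hBv]; rfl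
  have lift : ∀ {s t : V} (w : G.Walk s t), C s → (∀ u ∈ w.support, u ∉ Zv) →
      ∃ r : H.Walk s t, ∀ u ∈ r.support, u ∉ Zv := by
    intro s t w
    induction w with
    | nil => intro _ h; exact ⟨Walk.nil, by simpa using h⟩
    | @cons s b t hadj p ih =>
      intro hs h
      have hb : C b := hCstep s b hs hadj (h b (by simp))
      obtain ⟨r, hr⟩ := ih hb (fun u hu => h u (by simp [hu]))
      refine ⟨Walk.cons ((hHadj s b).2 ⟨hadj, Or.inl hs⟩) r, ?_⟩
      intro u hu
      rw [Walk.support_cons, List.mem_cons] at hu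
      rcases hu with rfl | hu
      · exact hCnot _ hs
      · exact hr u hu
  have walkC : ∀ c, C c → ∃ r : H.Walk a c, ∀ u ∈ r.support, u ∉ Zv := by
    rintro c ⟨w, hw⟩
    exact lift w hCa hw
  have att : ∀ z ∈ B.verts, z ∈ Zv → ∀ c, C c →
      ∃ r : H.Walk z c, ∀ u ∈ r.support, u ∈ Zv → u = z := by
    intro z hz hzZ c hc
    obtain ⟨-, d, hd, hadj⟩ := ((hvert z).1 hz).resolve_left fun h => hCnot z h hzZ
    obtain ⟨r, hr⟩ := walkC d hd
    obtain ⟨r', hr'⟩ := walkC c hc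
    refine ⟨Walk.cons ((hHadj z d).2 ⟨hadj.symm, Or.inr hd⟩) (r.reverse.append r'), ?_⟩
    intro u hu huZ
    rw [Walk.support_cons, List.mem_cons, Walk.mem_support_append_iff, Walk.support_reverse,
      List.mem_reverse] at hu
    rcases hu with h | h | h
    · exact h
    · exact absurd huZ (hr u h)
    · exact absurd huZ (hr' u h)
  have hitZ : ∀ {s t : V} (w : G.Walk s t), t ∈ Zv → C s →
      ∃ m, m ∈ Zv ∧ m ∈ B.verts ∧ ∃ r : H.Walk s m, ∀ u ∈ r.support, u ∈ w.support := by
    intro s t w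
    induction w with
    | nil => intro h1 h2; exact absurd h1 (hCnot _ h2)
    | @cons s b t hadj p ih =>
      intro ht hs
      have hadj' : H.Adj s b := (hHadj s b).2 ⟨hadj, Or.inl hs⟩
      by_cases hb : b ∈ Zv
      · refine ⟨b, hb, (hvert b).2 (Or.inr ⟨hb, s, hs, hadj⟩), Walk.cons hadj' Walk.nil, ?_⟩
        intro u hu
        simp only [Walk.support_cons, Walk.support_nil, List.mem_cons, List.not_mem_nil,
          or_false] at hu ⊢
        rcases hu with rfl | rfl
        · exact Or.inl rfl
        · exact Or.inr p.start_mem_support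
      · obtain ⟨m, hm, hmB, r, hr⟩ := ih ht (hCstep s b hs hadj hb)
        refine ⟨m, hm, hmB, Walk.cons hadj' r, ?_⟩
        intro u hu
        rw [Walk.support_cons, List.mem_cons] at hu ⊢
        exact hu.imp id (hr u)
  have proper : ∀ x y, x ∈ B.verts → ∀ w : H.Walk x y,
      (∀ u ∈ w.support, u ∈ Zv → u = x ∨ u = y) → IsProperWalkIn B Zv Ze (w.mapLe hHle) := by
    intro x y hx w hw
    refine ⟨?_, ?_, ?_, ?_⟩
    · rw [Walk.support_mapLe_eq_support]; exact sp_support w hx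
    · rw [Walk.edges_mapLe_eq_edges]
      intro e he
      have := w.edges_subset_edgeSet he
      rwa [hH, Subgraph.edgeSet_spanningCoe] at this
    · rw [Walk.support_mapLe_eq_support]; exact hw
    · rw [Walk.edges_mapLe_eq_edges]
      intro e he heZ
      induction e with
      | _ s t =>
        have h1 := (hHadj s t).1 (w.adj_of_mem_edges he)
        have h3 := hZe s t heZ
        rcases h1.2 with h | h
        · exact hCnot _ h h3.1
        · exact hCnot _ h h3.2
  have wlmap : ∀ {x y : V} (w : H.Walk x y), walkLambda lam (w.mapLe hHle) = walkLambda lam w := by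
    intro x y w
    simp only [walkLambda, Walk.edges_mapLe_eq_edges]
  have hnt' : ∀ x y, x ∈ B.verts → x ∈ Zv → y ∈ B.verts → y ∈ Zv → x ≠ y →
      ∀ w : H.Walk x y, w.IsPath → (∀ u ∈ w.support, u ∈ Zv → u = x ∨ u = y) →
      walkLambda lam w = 1 := by
    intro x y hx hxZ hy hyZ hxy w hw hwZ
    have := hnt x y hx hxZ hy hyZ hxy (w.mapLe hHle) ((Walk.isPath_mapLe hHle).2 hw)
      (proper x y hx w hwZ)
    rw [wlmap] at this
    exact z2_one this
  -- two attachments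
  obtain ⟨-, hconn, hdel⟩ := h2
  obtain ⟨x, hxZ, hx⟩ : ∃ x, x ∈ Zv ∧ x ∈ B.verts := by
    obtain ⟨z, hz, -⟩ := hZ2 a
    obtain ⟨w⟩ := hconn.preconnected a z
    obtain ⟨m, hm, hmB, -⟩ := hitZ w hz hCa
    exact ⟨m, hm, hmB⟩
  have other : ∀ v t, C t → t ≠ v → ∃ m, m ∈ Zv ∧ m ∈ B.verts ∧
      ∃ r : H.Walk t m, v ∉ r.support := by
    intro v t ht htv
    obtain ⟨z, hz, hzv⟩ := hZ2 v
    obtain ⟨w, hw⟩ := avoid_walk (hdel v) htv hzv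
    obtain ⟨m, hm, hmB, r, hr⟩ := hitZ w hz ht
    exact ⟨m, hm, hmB, r, fun h => hw (hr v h)⟩
  obtain ⟨y, hyZ, hy, hxy⟩ : ∃ y, y ∈ Zv ∧ y ∈ B.verts ∧ x ≠ y := by
    obtain ⟨m, hm, hmB, r, hr⟩ := other x a hCa (by rintro rfl; exact haZ hxZ)
    exact ⟨m, hm, hmB, by rintro rfl; exact hr r.end_mem_support⟩
  -- a path from x to y
  obtain ⟨P, hP, hPZ⟩ : ∃ P : H.Walk x y, P.IsPath ∧
      ∀ u ∈ P.support, u ∈ Zv → u = x ∨ u = y := by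
    obtain ⟨r, hr⟩ := att x hx hxZ a hCa
    obtain ⟨r', hr'⟩ := att y hy hyZ a hCa
    refine ⟨(r.append r'.reverse).bypass, Walk.bypass_isPath _, fun u hu huZ => ?_⟩
    have := Walk.support_bypass_subset_support _ hu
    rw [Walk.mem_support_append_iff, Walk.support_reverse, List.mem_reverse] at this
    exact this.imp (fun h => hr u h huZ) (fun h => hr' u h huZ)
  have hPl := hnt' x y hx hxZ hy hyZ hxy P hP hPZ
  obtain ⟨c, hcP, hcC⟩ : ∃ c ∈ P.support, C c := by
    clear hPl hP hPZ
    cases P with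
    | nil => exact absurd rfl hxy
    | @cons _ c _ hadj p =>
      exact ⟨c, by simp, ((hHadj _ _).1 hadj).2.resolve_left fun h => hCnot _ h hxZ⟩
  have honly : ∀ z, z ∈ B.verts → z ∈ Zv → z = x ∨ z = y := by
    intro z hz hzZ
    by_contra hcon
    rw [not_or] at hcon
    obtain ⟨hzx, hzy⟩ := hcon
    obtain ⟨r₀, hr₀⟩ := att z hz hzZ c hcC
    obtain ⟨m, hm, r₁, hr₁, hr₁'⟩ := first_hit (S := {t | t ∈ P.support}) r₀ hcP
    obtain ⟨r, hrp, hrz, hrm⟩ : ∃ r : H.Walk z m, r.IsPath ∧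
        (∀ t ∈ r.support, t ∈ Zv → t = z) ∧ ∀ t ∈ r.support, t ∈ P.support → t = m :=
      ⟨r₁.bypass, Walk.bypass_isPath _,
        fun t ht => hr₀ t (hr₁ t (Walk.support_bypass_subset_support _ ht)),
        fun t ht => hr₁' t (Walk.support_bypass_subset_support _ ht)⟩
    obtain ⟨p, q, hp, hq, hpq, hdis⟩ := path_split hP hm
    have hpw : ∀ t ∈ p.support, t ∈ P.support := fun t ht => by
      rw [hpq, Walk.mem_support_append_iff]; exact Or.inl ht
    have hqw : ∀ t ∈ q.support, t ∈ P.support := fun t ht => by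
      rw [hpq, Walk.mem_support_append_iff]; exact Or.inr ht
    have hmx : m ≠ x := by
      rintro rfl; exact hzx (hrz _ r.end_mem_support hxZ).symm
    have hmy : m ≠ y := by
      rintro rfl; exact hzy (hrz _ r.end_mem_support hyZ).symm
    have e1 : walkLambda lam (r.append p.reverse) = 1 := by
      refine hnt' z x hz hzZ hx hxZ hzx _ (path_append hrp hp.reverse ?_) ?_
      · intro t ht ht'
        exact hrm t ht (hpw t (by simpa using ht'))
      · intro u hu huZ
        rw [Walk.mem_support_append_iff, Walk.support_reverse, List.mem_reverse] at hu
        rcases hu with hu | hu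
        · exact Or.inl (hrz u hu huZ)
        · rcases hPZ u (hpw u hu) huZ with h | rfl
          · exact Or.inr h
          · exact absurd (hdis u hu q.end_mem_support).symm hmy
    have e2 : walkLambda lam (r.append q) = 1 := by
      refine hnt' z y hz hzZ hy hyZ hzy _ (path_append hrp hq ?_) ?_
      · intro t ht ht'
        exact hrm t ht (hqw t ht')
      · intro u hu huZ
        rw [Walk.mem_support_append_iff] at hu
        rcases hu with hu | hu
        · exact Or.inl (hrz u hu huZ)
        · rcases hPZ u (hqw u hu) huZ with rfl | h
          · exact absurd (hdis u p.start_mem_support hu).symm hmx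
          · exact Or.inr h
    rw [hpq, wl_append] at hPl
    rw [wl_append, wl_reverse] at e1
    rw [wl_append] at e2
    revert hPl e1 e2
    generalize walkLambda lam p = i
    generalize walkLambda lam q = j
    generalize walkLambda lam r = k
    revert i j k
    decide
  obtain ⟨f, hf⟩ := exists_pot (H := H) (lam := lam) hxy (T := B.verts)
    (fun s t h => B.edge_vert (show B.Adj s t from h))
    (fun w hw => hnt' x y hx hxZ hy hyZ hxy w hw
      fun u hu huZ => honly u (sp_support w hx u hu) huZ)
    (by
      intro t ht htx hty v hv
      have htC : C t := by
        rcases (hvert t).1 ht with h | h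
        · exact h
        · rcases honly t ht h.1 with h | h
          · exact absurd h htx
          · exact absurd h hty
      obtain ⟨m, hm, hmB, r, hr⟩ := other v t htC hv.symm
      exact ⟨m, honly m hmB hm, r, hr⟩)
  have closed : ∀ (v : V) (w : G.Walk v v), IsProperWalkIn B Zv Ze w → walkLambda lam w = 0 := by
    intro v w hw
    rw [wl_pot w fun c d hcd => hf c d (hw.2.1 _ hcd), z2_self]
  refine ⟨x, y, hxy, ?_, ⟨P.mapLe hHle, proper x y hx P hPZ, ?_⟩, closed x, closed y⟩
  · ext t
    constructor
    · rintro ⟨h, h'⟩; exact honly t h h'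
    · rintro (rfl | rfl)
      · exact ⟨hx, hxZ⟩
      · exact ⟨hy, hyZ⟩
  · rw [wlmap, hPl]; decide

theorem edge_case (G : SimpleGraph V) (lam : Sym2 V → ZMod 2)
    (Zv : Set V) (Ze : Set (Sym2 V)) (B : G.Subgraph) (u v : V) (huv : G.Adj u v)
    (he : s(u, v) ∉ Ze) (hu : u ∈ Zv) (hv : v ∈ Zv)
    (hBv : B.verts = {u, v}) (hBa : ∀ a b, B.Adj a b ↔ s(a, b) = s(u, v))
    (hnt : ∀ x y, x ∈ B.verts → x ∈ Zv → y ∈ B.verts → y ∈ Zv → x ≠ y →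
      ∀ w : G.Walk x y, w.IsPath → IsProperWalkIn B Zv Ze w → walkLambda lam w ≠ 0) :
    ∃ x y : V, x ≠ y ∧ B.verts ∩ Zv = {x, y} ∧
      (∃ w : G.Walk x y, IsProperWalkIn B Zv Ze w ∧ walkLambda lam w ≠ 0) ∧
      (∀ w : G.Walk x x, IsProperWalkIn B Zv Ze w → walkLambda lam w = 0) ∧
      (∀ w : G.Walk y y, IsProperWalkIn B Zv Ze w → walkLambda lam w = 0) := by
  have closed : ∀ (t : V) (w : G.Walk t t), IsProperWalkIn B Zv Ze w → walkLambda lam w = 0 := by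
    intro t w hw
    cases w with
    | nil => simp [walkLambda]
    | @cons _ c _ hadj p =>
      exfalso
      have hc : c ∈ B.verts := hw.1 c (by simp)
      have hcZ : c ∈ Zv := by
        rw [hBv] at hc
        rcases hc with rfl | rfl <;> assumption
      have := hw.2.2.1 c (by simp) hcZ
      simp only [or_self] at this
      exact hadj.ne this.symm
  have hw : IsProperWalkIn B Zv Ze (Walk.cons huv Walk.nil) := by
    refine ⟨by simp [hBv], ?_, by simp, by simpa using he⟩
    intro e hee
    simp only [Walk.edges_cons, Walk.edges_nil, List.mem_singleton] at hee
    subst hee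
    exact (hBa u v).2 rfl
  refine ⟨u, v, huv.ne, ?_, ⟨Walk.cons huv Walk.nil, hw, ?_⟩, closed u, closed v⟩
  · rw [hBv, Set.inter_eq_left]
    rintro t (rfl | rfl) <;> assumption
  · exact hnt u v (by simp [hBv]) hu (by simp [hBv]) hv huv.ne _ (by simp [huv.ne]) hw

end Aux2

/-- In a 2-connected graph, if every proper path in a bridge `B` with both
(distinct) endpoints in `V(B) ∩ V(Z)` is nontrivial, then `V(B) ∩ V(Z)` consists of
exactly two vertices `x ≠ y`, `B` induces the arrow between them (there is a nontrivial
proper walk in `B` from `x` to `y`), and `B` induces no loop (every proper closed walk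
in `B` based at `x` or at `y` is trivial). -/
theorem statement7 [Fintype V] (G : SimpleGraph V) (lam : Sym2 V → ZMod 2)
    (h2 : TwoConnected G)
    (z₀ : V) (Z : G.Walk z₀ z₀) (hZ : Z.IsCycle) (B : G.Subgraph)
    (hB : IsBridgeOf G {u | u ∈ Z.support} {e | e ∈ Z.edges} B)
    (hnt : ∀ x y, x ∈ B.verts → x ∈ Z.support → y ∈ B.verts → y ∈ Z.support → x ≠ y →
      ∀ w : G.Walk x y, w.IsPath →
        IsProperWalkIn B {u | u ∈ Z.support} {e | e ∈ Z.edges} w →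
        walkLambda lam w ≠ 0) :
    ∃ x y : V, x ≠ y ∧ B.verts ∩ {u | u ∈ Z.support} = {x, y} ∧
      (∃ w : G.Walk x y, IsProperWalkIn B {u | u ∈ Z.support} {e | e ∈ Z.edges} w ∧
        walkLambda lam w ≠ 0) ∧
      (∀ w : G.Walk x x, IsProperWalkIn B {u | u ∈ Z.support} {e | e ∈ Z.edges} w →
        walkLambda lam w = 0) ∧
      (∀ w : G.Walk y y, IsProperWalkIn B {u | u ∈ Z.support} {e | e ∈ Z.edges} w →
        walkLambda lam w = 0) := by
  rcases hB with ⟨u, v, huv, he, hu, hv, hBv, hBa⟩ | ⟨a, ha, hBv, hBa⟩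
  · exact edge_case G lam _ _ B u v huv he hu hv hBv hBa hnt
  · refine comp_case G lam h2 _ _ B ?_ ?_ a ha hBv hBa hnt
    · intro v
      have hadj := Z.adj_snd hZ.not_nil
      by_cases h : z₀ = v
      · exact ⟨Z.snd, Z.getVert_mem_support 1, by rw [← h]; exact hadj.ne'⟩
      · exact ⟨z₀, Z.start_mem_support, h⟩
    · intro c d h
      exact ⟨Z.fst_mem_support_of_mem_edges h, Z.snd_mem_support_of_mem_edges h⟩
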